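/- arXiv:2601.01013 — 5 statements merged into one kernel-verified Lean document; each statement's English description precedes it below -/
import Mathlib

section
/- The instantaneous price of a security is the partial derivative of the LMSR cost function with respect to that security's outstanding share quantity: for every q : Ω → ℝ and every ω ∈ Ω, the function t ↦ C(q updated so that its ω-coordinate is t) has derivative p_ω(q) at t = q_ω. -/
/-!
Moving one coordinate of `q` changes only one term of the partition function
`S(q) = ∑ ω, exp(q ω / b)`, so `∂S/∂q_ω = exp(q ω / b) / b` without any interchange of derivative
and sum, even for infinitely many outcomes. The chain rule for `b * log S` divides this by `S`, and
the prefactor `b` cancels the inner `1 / b`.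
-/

section Update

variable {ι : Type*} [DecidableEq ι]

theorem tsum_apply_update {X G : Type*} [AddCommGroup G] [TopologicalSpace G]
    [IsTopologicalAddGroup G] [T2Space G] {f : ι → X → G} {q : ι → X}
    (hf : Summable fun j => f j (q j)) (i : ι) (x : X) :
    ∑' j, f j (Function.update q i x j) = f i x - f i (q i) + ∑' j, f j (q j) := by
  simp only [Function.apply_update f]
  exact (hf.hasSum.update i (f i x)).tsum_eq

theorem hasDerivAt_tsum_apply_update {𝕜 F : Type*} [NontriviallyNormedField 𝕜]
    [NormedAddCommGroup F] [NormedSpace 𝕜 F] {f : ι → 𝕜 → F} {q : ι → 𝕜}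
    (hf : Summable fun j => f j (q j)) {i : ι} {f' : F} {x : 𝕜} (hfi : HasDerivAt (f i) f' x) :
    HasDerivAt (fun t => ∑' j, f j (Function.update q i t j)) f' x := by
  simp only [tsum_apply_update hf]
  exact (hfi.sub_const _).add_const _

end Update

theorem lmsr_price_is_deriv_of_cost_general {Ω : Type*} [DecidableEq Ω] {b : ℝ} (hb : b ≠ 0)
    {q : Ω → ℝ} (hq : Summable fun ω => Real.exp (q ω / b)) (ω : Ω) :
    HasDerivAt
      (fun t : ℝ => b * Real.log (∑' ω', Real.exp (Function.update q ω t ω' / b)))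
      (Real.exp (q ω / b) / ∑' ω', Real.exp (q ω' / b))
      (q ω) := by
  have partition_pos : 0 < ∑' ω', Real.exp (q ω' / b) :=
    hq.tsum_pos (fun _ => (Real.exp_pos _).le) ω (Real.exp_pos _)
  have term_deriv : HasDerivAt (fun t : ℝ => Real.exp (t / b))
      (Real.exp (q ω / b) * (1 / b)) (q ω) :=
    ((hasDerivAt_id (q ω)).div_const b).exp
  have partition_deriv : HasDerivAt
      (fun t : ℝ => ∑' ω', Real.exp (Function.update q ω t ω' / b))
      (Real.exp (q ω / b) * (1 / b)) (q ω) :=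
    hasDerivAt_tsum_apply_update (f := fun _ t => Real.exp (t / b)) hq term_deriv
  have cost_deriv := (partition_deriv.log
    (by simpa only [Function.update_eq_self] using partition_pos.ne')).const_mul b
  rw [Function.update_eq_self] at cost_deriv
  exact cost_deriv.congr_deriv (by field_simp)

/-- The instantaneous price of a security is the partial derivative of the LMSR
cost function `C(q) = b·log(∑ ω, exp(q ω / b))` with respect to that security's
outstanding share quantity: the map `t ↦ C(Function.update q ω t)` has derivative
`p_ω(q) = exp(q ω / b) / ∑ ω', exp(q ω' / b)` at `t = q ω`. -/
theorem lmsr_price_is_deriv_of_cost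
    {Ω : Type*} [Fintype Ω] [Nonempty Ω] [DecidableEq Ω]
    (b : ℝ) (hb : 0 < b) (q : Ω → ℝ) (ω : Ω) :
    HasDerivAt
      (fun t : ℝ => b * Real.log (∑ ω' : Ω, Real.exp (Function.update q ω t ω' / b)))
      (Real.exp (q ω / b) / ∑ ω' : Ω, Real.exp (q ω' / b))
      (q ω) := by
  simpa only [tsum_fintype] using
    lmsr_price_is_deriv_of_cost_general hb.ne' Summable.of_finite ω
end

section
/- The new atomic proposition is statistically independent of every existing security: for every q : Ω → ℝ and every T ⊆ Ω, the extended-market price of the conjunction security ℓ(T) ∩ S = T × {true} equals the product of the extended-market price of ℓ(T) = T × Bool and the extended-market price of S = Ω × {true}, where all extended prices are computed from q̃(ω,t) = q(ω). -/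
open Finset

/-!
With zero initial holdings the weight `exp (q̃ (ω, t) / b)` is the product of `exp (q ω / b)` and
the constant weight `1` on truth values. Sums of product weights over rectangles factor, and so does
the normalizing constant, so the price of a rectangle is the product of the prices of its sides.
-/

section RelWeight

variable {Ω Θ K : Type*} [Fintype Ω] [Fintype Θ] [Semifield K]

/-- The proportion of the total weight carried by `S`. For `w ω = exp (q ω / b)` this is the LMSR
price of the security `S`. Arbitrary weights are allowed so that a market on a product of outcome
sets can be compared with markets on the factors; the value is `0` when the total weight is `0`. -/
def relWeight (w : Ω → K) (S : Finset Ω) : K :=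
  (∑ ω ∈ S, w ω) / ∑ ω, w ω

theorem relWeight_univ {w : Ω → K} (hw : ∑ ω, w ω ≠ 0) : relWeight w univ = 1 :=
  div_self hw

theorem relWeight_product (w : Ω → K) (v : Θ → K) (S : Finset Ω) (T : Finset Θ) :
    relWeight (fun p : Ω × Θ ↦ w p.1 * v p.2) (S ×ˢ T) = relWeight w S * relWeight v T := by
  simp only [relWeight, ← univ_product_univ, sum_product, ← sum_mul_sum, div_mul_div_comm]

theorem new_atomic_independent_of_existing_general {w : Ω → K} {v : Θ → K}
    (hw : ∑ ω, w ω ≠ 0) (hv : ∑ θ, v θ ≠ 0) (S : Finset Ω) (T : Finset Θ) :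
    relWeight (fun p : Ω × Θ ↦ w p.1 * v p.2) (S ×ˢ T) =
      relWeight (fun p : Ω × Θ ↦ w p.1 * v p.2) (S ×ˢ univ) *
        relWeight (fun p : Ω × Θ ↦ w p.1 * v p.2) (univ ×ˢ T) := by
  simp only [relWeight_product, relWeight_univ hw, relWeight_univ hv, mul_one, one_mul]

end RelWeight

/-- The new atomic proposition is statistically independent of every existing
security: in the extended market on `Ω × Bool` with `q̃(ω,t) = q ω`, the price of
the conjunction security `ℓ(T) ∩ S = T ×ˢ {true}` equals the product of the price
of `ℓ(T) = T ×ˢ univ` and the price of `S = univ ×ˢ {true}`. -/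
theorem new_atomic_independent_of_existing
    {Ω : Type*} [Fintype Ω] [Nonempty Ω] [DecidableEq Ω]
    (b : ℝ) (hb : 0 < b) (q : Ω → ℝ) (T : Finset Ω) :
    (∑ p ∈ T ×ˢ ({true} : Finset Bool), Real.exp (q p.1 / b)) /
      (∑ p : Ω × Bool, Real.exp (q p.1 / b))
    = ((∑ p ∈ T ×ˢ (univ : Finset Bool), Real.exp (q p.1 / b)) /
        (∑ p : Ω × Bool, Real.exp (q p.1 / b))) *
      ((∑ p ∈ ((univ : Finset Ω) ×ˢ ({true} : Finset Bool)), Real.exp (q p.1 / b)) /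
        (∑ p : Ω × Bool, Real.exp (q p.1 / b))) := by
  have hw : ∑ ω, Real.exp (q ω / b) ≠ 0 :=
    (sum_pos (fun _ _ ↦ Real.exp_pos _) univ_nonempty).ne'
  have hv : ∑ _t : Bool, (1 : ℝ) ≠ 0 := by simp
  simpa only [relWeight, mul_one] using
    new_atomic_independent_of_existing_general hw hv T {true}
end

section
/- Under negative initialization, the prices of all existing securities converge to their original values: fix q : Ω → ℝ and for K > 0 define q̃_K on Ω × Bool by q̃_K(ω,true) = q(ω) − K·b and q̃_K(ω,false) = q(ω). Then for every T ⊆ Ω, the extended-market price of the lifted security ℓ(T) = T × Bool computed from q̃_K tends, as K → ∞, to the original price Σ_{ω∈T} exp(q(ω)/b) / Σ_{ω'∈Ω} exp(q(ω')/b). -/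
open Finset Filter

/-!
Shifting all outcomes `(ω, i)` by `s i * b` shares multiplies their weights `exp (q ω / b)` by
`exp (s i)`. Summing over `i`, the numerator and the denominator of the price of a lifted security
acquire the same factor `∑ i, exp (s i)`, so the price does not move at all: the limit in `K` is the
limit of a constant.
-/

section LMSR

variable {Ω ι : Type*}

/-- The LMSR price `p_S(q)` of the compound security `S` at liquidity `b`, where `q ω` is the number
of outstanding shares of the outcome `ω`. -/
noncomputable def lmsrPrice [Fintype Ω] (b : ℝ) (q : Ω → ℝ) (S : Finset Ω) : ℝ :=
  (∑ ω ∈ S, Real.exp (q ω / b)) / ∑ ω, Real.exp (q ω / b)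

/-- The share vector on `Ω × ι` after a new proposition with answers `ι` is added to a market with
share vector `q`, its answer `i` being initialized with `s i * b` shares. Negative initialization
is the case `ι = Bool`, with `s true = -K` and `s false = 0`. -/
def initializeShares (b : ℝ) (q : Ω → ℝ) (s : ι → ℝ) (p : Ω × ι) : ℝ :=
  q p.1 + s p.2 * b

theorem ite_sub_mul_eq_initializeShares (b K : ℝ) (q : Ω → ℝ) (p : Ω × Bool) :
    (if p.2 = true then q p.1 - K * b else q p.1) =
      initializeShares b q (fun i => if i = true then -K else 0) p := by
  simp only [initializeShares]
  split_ifs <;> ring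

theorem exp_initializeShares_div {b : ℝ} (hb : b ≠ 0) (q : Ω → ℝ) (s : ι → ℝ) (p : Ω × ι) :
    Real.exp (initializeShares b q s p / b) = Real.exp (q p.1 / b) * Real.exp (s p.2) := by
  rw [initializeShares, add_div, mul_div_cancel_right₀ _ hb, Real.exp_add]

theorem sum_product_exp_initializeShares_div {b : ℝ} (hb : b ≠ 0) (q : Ω → ℝ) (s : ι → ℝ)
    (S : Finset Ω) (U : Finset ι) :
    ∑ p ∈ S ×ˢ U, Real.exp (initializeShares b q s p / b) =
      (∑ ω ∈ S, Real.exp (q ω / b)) * ∑ i ∈ U, Real.exp (s i) := by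
  simp only [exp_initializeShares_div hb, sum_product, sum_mul_sum]

theorem negative_initialization_prices_tendsto_original_general
    [Fintype Ω] [Nonempty Ω] [Fintype ι] [Nonempty ι]
    {b : ℝ} (hb : b ≠ 0) (q : Ω → ℝ) (s : ι → ℝ) (T : Finset Ω) :
    lmsrPrice b (initializeShares b q s) (T ×ˢ univ) = lmsrPrice b q T := by
  have factor_ne_zero : ∑ i, Real.exp (s i) ≠ 0 :=
    (sum_pos (fun i _ => Real.exp_pos (s i)) univ_nonempty).ne'
  rw [lmsrPrice, ← univ_product_univ, sum_product_exp_initializeShares_div hb,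
    sum_product_exp_initializeShares_div hb, mul_div_mul_right _ _ factor_ne_zero, lmsrPrice]

end LMSR

/-- Under negative initialization, the prices of all existing securities converge
to their original values: with `q̃_K(ω,true) = q ω − K·b` and
`q̃_K(ω,false) = q ω` on `Ω × Bool`, for every `T ⊆ Ω` the extended-market LMSR
price of the lifted security `ℓ T = T ×ˢ univ` tends, as `K → ∞`, to the original
price `(∑ ω ∈ T, exp (q ω / b)) / (∑ ω', exp (q ω' / b))`. -/
theorem negative_initialization_prices_tendsto_original
    {Ω : Type*} [Fintype Ω] [Nonempty Ω]
    (b : ℝ) (hb : 0 < b) (q : Ω → ℝ) (T : Finset Ω) :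
    Tendsto
      (fun K : ℝ =>
        (∑ p ∈ T ×ˢ (univ : Finset Bool),
            Real.exp ((if p.2 = true then q p.1 - K * b else q p.1) / b)) /
          (∑ p : Ω × Bool,
            Real.exp ((if p.2 = true then q p.1 - K * b else q p.1) / b)))
      atTop
      (nhds ((∑ ω ∈ T, Real.exp (q ω / b)) / (∑ ω : Ω, Real.exp (q ω / b)))) := by
  simp only [ite_sub_mul_eq_initializeShares]
  exact tendsto_const_nhds.congr fun _ =>
    (negative_initialization_prices_tendsto_original_general hb.ne' q _ T).symm
end

section
/- Under negative initialization, cost differences converge to their original values: for any two share vectors q¹, q² : Ω → ℝ and K > 0, define q̃ⁱ_K on Ω × Bool by q̃ⁱ_K(ω,true) = qⁱ(ω) − K·b and q̃ⁱ_K(ω,false) = qⁱ(ω). Then C̃(q̃¹_K) − C̃(q̃²_K) tends to C(q¹) − C(q²) as K → ∞, where C and C̃ are the LMSR cost functions on Ω and Ω × Bool respectively. -/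
open Filter

/-! On a product, `exp ((q ω + s a * b) / b) = exp (q ω / b) * exp (s a)`, so the sum inside the
logarithm factors and offsetting shares by `s a * b` raises the cost by `b * log (∑ a, exp (s a))`,
whatever `q` is. This increment cancels in every cost difference, which is therefore independent of
the offset; the limit is that of a constant function. -/

section LMSR

variable {Ω A : Type*}

/-- The shares on the refined outcome set `Ω × A` when outcomes with new coordinate `a`
start at an offset of `s a`, measured in units of the liquidity parameter `b`. -/
def offsetShares (b : ℝ) (s : A → ℝ) (q : Ω → ℝ) : Ω × A → ℝ :=
  fun p => q p.1 + s p.2 * b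

/-- The offsets, in units of the liquidity parameter, of negative initialization at level `K`: the
new security is the event with coordinate `true`. -/
def negativeOffset (K : ℝ) (a : Bool) : ℝ :=
  if a = true then -K else 0

theorem offsetShares_negativeOffset_apply (b K : ℝ) (q : Ω → ℝ) (p : Ω × Bool) :
    offsetShares b (negativeOffset K) q p = if p.2 = true then q p.1 - K * b else q p.1 := by
  unfold offsetShares negativeOffset
  split_ifs <;> ring

variable [Fintype Ω] [Fintype A]

theorem sum_prod_exp_add (f : Ω → ℝ) (g : A → ℝ) :
    ∑ p : Ω × A, Real.exp (f p.1 + g p.2) = (∑ ω, Real.exp (f ω)) * ∑ a, Real.exp (g a) := by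
  simp only [Real.exp_add, Fintype.sum_mul_sum, Fintype.sum_prod_type]

/-- The cost function of the logarithmic market scoring rule with liquidity parameter `b`, at the
share vector `q`. -/
noncomputable def lmsrCost (b : ℝ) (q : Ω → ℝ) : ℝ :=
  b * Real.log (∑ ω, Real.exp (q ω / b))

variable [Nonempty Ω] [Nonempty A]

theorem lmsrCost_offsetShares {b : ℝ} (hb : b ≠ 0) (s : A → ℝ) (q : Ω → ℝ) :
    lmsrCost b (offsetShares b s q) = lmsrCost b q + b * Real.log (∑ a, Real.exp (s a)) := by
  have hq : ∑ ω, Real.exp (q ω / b) ≠ 0 := by positivity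
  have hs : ∑ a, Real.exp (s a) ≠ 0 := by positivity
  simp only [lmsrCost, offsetShares, add_div, mul_div_cancel_right₀ _ hb]
  rw [sum_prod_exp_add (fun ω => q ω / b) s, Real.log_mul hq hs, mul_add]

theorem negative_initialization_cost_differences_tendsto_original_general
    {b : ℝ} (hb : b ≠ 0) (s : A → ℝ) (q₁ q₂ : Ω → ℝ) :
    lmsrCost b (offsetShares b s q₁) - lmsrCost b (offsetShares b s q₂) =
      lmsrCost b q₁ - lmsrCost b q₂ := by
  rw [lmsrCost_offsetShares hb, lmsrCost_offsetShares hb, add_sub_add_right_eq_sub]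

end LMSR

/-- Under negative initialization, cost differences converge to their original
values: with `q̃ⁱ_K(ω,true) = qⁱ ω − K·b` and `q̃ⁱ_K(ω,false) = qⁱ ω` on
`Ω × Bool`, `C̃(q̃¹_K) − C̃(q̃²_K)` tends to `C(q¹) − C(q²)` as `K → ∞`, where
`C` and `C̃` are the LMSR cost functions on `Ω` and `Ω × Bool`. -/
theorem negative_initialization_cost_differences_tendsto_original
    {Ω : Type*} [Fintype Ω] [Nonempty Ω]
    (b : ℝ) (hb : 0 < b) (q1 q2 : Ω → ℝ) :
    Tendsto
      (fun K : ℝ =>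
        b * Real.log (∑ p : Ω × Bool,
            Real.exp ((if p.2 = true then q1 p.1 - K * b else q1 p.1) / b))
        - b * Real.log (∑ p : Ω × Bool,
            Real.exp ((if p.2 = true then q2 p.1 - K * b else q2 p.1) / b)))
      atTop
      (nhds (b * Real.log (∑ ω : Ω, Real.exp (q1 ω / b))
        - b * Real.log (∑ ω : Ω, Real.exp (q2 ω / b)))) := by
  simp only [← offsetShares_negativeOffset_apply]
  exact tendsto_const_nhds.congr fun K =>
    (negative_initialization_cost_differences_tendsto_original_general hb.ne'
      (negativeOffset K) q1 q2).symm
end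

section
/- In the golden-ratio-initialized NAND market, all three propositional securities are priced exactly 1/2: let Ω be the set of the 7 truth assignments (a, r, β) ∈ Bool³ satisfying ¬(a ∧ β ∧ r), let φ = (1 + √5)/2, and define q(ω) = b·(log φ)·(number of true coordinates of ω). Then for each of the three securities A = {ω : ω_a = true}, R = {ω : ω_r = true}, B = {ω : ω_β = true}, the LMSR price Σ_{ω∈S} exp(q(ω)/b) / Σ_{ω'∈Ω} exp(q(ω')/b) equals 1/2. -/
/-!
Identify an outcome with the set of propositions true in it: the constraint leaves the proper
subsets of the three propositions, and a set `t` has weight `φ ^ #t`. Fix a proposition. The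
outcomes where it is false are all subsets of the other two, of total weight `(1 + φ) ^ 2`; those
where it is true arise by adding it to a proper subset of the other two, so their total weight is
`φ * ((1 + φ) ^ 2 - φ ^ 2)`. The two agree because `φ ^ 2 = φ + 1`.
-/

open Finset

/-- The outcome space of the NAND Carroll structure: triples `(a, r, β)` of
Boolean truth values (for `A`, the edge `r`, and `B`) satisfying `¬(a ∧ β ∧ r)`.
There are 7 such assignments. -/
abbrev CarrollNAND : Type :=
  {v : Bool × Bool × Bool // ¬(v.1 = true ∧ v.2.2 = true ∧ v.2.1 = true)}

/-- The golden-ratio-initialized share vector: each outcome `ω` holds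
`b·(log φ)·(number of true coordinates of ω)` shares, where `φ = (1 + √5)/2`. -/
noncomputable def goldenShares (b : ℝ) (ω : CarrollNAND) : ℝ :=
  b * Real.log ((1 + Real.sqrt 5) / 2) *
    ((ω.val.1.toNat + ω.val.2.1.toNat + ω.val.2.2.toNat : ℕ) : ℝ)

section ProperSubsets

variable {ι : Type*}

theorem sum_powerset_pow_card {R : Type*} [CommSemiring R] (x : R) (s : Finset ι) :
    ∑ t ∈ s.powerset, x ^ #t = (1 + x) ^ #s := by
  simpa [add_comm] using sum_pow_mul_eq_add_pow x 1 s

variable [DecidableEq ι] {s : Finset ι} {a : ι}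

theorem filter_notMem_ssubsets_insert (ha : a ∉ s) :
    {t ∈ (insert a s).ssubsets | a ∉ t} = s.powerset := by
  ext t
  simp only [mem_filter, mem_ssubsets, mem_powerset]
  constructor
  · rintro ⟨hts, hat⟩
    exact (subset_insert_iff_of_notMem hat).mp hts.subset
  · intro hts
    exact ⟨hts.trans_ssubset (ssubset_insert ha), fun hat => ha (hts hat)⟩

theorem insert_ssubset_insert_iff {u : Finset ι} (hu : a ∉ u) (hs : a ∉ s) :
    insert a u ⊂ insert a s ↔ u ⊂ s := by
  rw [ssubset_def, ssubset_def, insert_subset_insert_iff hu, insert_subset_insert_iff hs]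

theorem filter_mem_ssubsets_insert (ha : a ∉ s) :
    {t ∈ (insert a s).ssubsets | a ∈ t} = s.ssubsets.image (insert a) := by
  ext t
  simp only [mem_filter, mem_ssubsets, mem_image]
  constructor
  · rintro ⟨hts, hat⟩
    rw [← insert_erase hat, insert_ssubset_insert_iff (notMem_erase a t) ha] at hts
    exact ⟨t.erase a, hts, insert_erase hat⟩
  · rintro ⟨u, hus, rfl⟩
    have hau : a ∉ u := fun h => ha (hus.subset h)
    exact ⟨(insert_ssubset_insert_iff hau ha).mpr hus, mem_insert_self a u⟩

theorem sum_ssubsets_pow_card {R : Type*} [CommRing R] (x : R) (s : Finset ι) :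
    ∑ t ∈ s.ssubsets, x ^ #t = (1 + x) ^ #s - x ^ #s := by
  rw [ssubsets, sum_erase_eq_sub (mem_powerset_self s), sum_powerset_pow_card]

theorem sum_ssubsets_insert_notMem_pow_card {R : Type*} [CommSemiring R] (x : R) (ha : a ∉ s) :
    ∑ t ∈ (insert a s).ssubsets with a ∉ t, x ^ #t = (1 + x) ^ #s := by
  rw [filter_notMem_ssubsets_insert ha, sum_powerset_pow_card]

theorem sum_ssubsets_insert_mem_pow_card {R : Type*} [CommRing R] (x : R) (ha : a ∉ s) :
    ∑ t ∈ (insert a s).ssubsets with a ∈ t, x ^ #t = x * ((1 + x) ^ #s - x ^ #s) := by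
  have notMem_of_mem : ∀ t ∈ s.ssubsets, a ∉ t :=
    fun t ht hat => ha ((mem_ssubsets.mp ht).subset hat)
  have insert_injOn : Set.InjOn (insert a) (s.ssubsets : Set (Finset ι)) :=
    insert_erase_invOn.2.injOn.mono notMem_of_mem
  calc ∑ t ∈ (insert a s).ssubsets with a ∈ t, x ^ #t
      = ∑ t ∈ s.ssubsets, x ^ #(insert a t) := by
        rw [filter_mem_ssubsets_insert ha, sum_image insert_injOn]
    _ = ∑ t ∈ s.ssubsets, x * x ^ #t :=
        sum_congr rfl fun t ht => by rw [card_insert_of_notMem (notMem_of_mem t ht), pow_succ']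
    _ = x * ((1 + x) ^ #s - x ^ #s) := by rw [← mul_sum, sum_ssubsets_pow_card]

theorem sum_ssubsets_mem_pow_card_eq_notMem_of_sq_eq_add_one {R : Type*} [CommRing R] {x : R}
    (hx : x ^ 2 = x + 1) (hs : #s = 3) (ha : a ∈ s) :
    ∑ t ∈ s.ssubsets with a ∈ t, x ^ #t = ∑ t ∈ s.ssubsets with a ∉ t, x ^ #t := by
  obtain ⟨u, hau, rfl⟩ : ∃ u, a ∉ u ∧ insert a u = s :=
    ⟨s.erase a, notMem_erase a s, insert_erase ha⟩
  have hu : #u = 2 := by simpa [card_insert_of_notMem hau] using hs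
  rw [sum_ssubsets_insert_mem_pow_card x hau, sum_ssubsets_insert_notMem_pow_card x hau, hu]
  linear_combination hx

end ProperSubsets

theorem sum_filter_div_sum_eq_one_half {κ K : Type*} [Semifield K] [NeZero (2 : K)]
    {s : Finset κ} {p : κ → Prop} [DecidablePred p] {f : κ → K} (hf : ∑ i ∈ s, f i ≠ 0)
    (h : ∑ i ∈ s with p i, f i = ∑ i ∈ s with ¬p i, f i) :
    (∑ i ∈ s with p i, f i) / ∑ i ∈ s, f i = 1 / 2 := by
  rw [div_eq_div_iff hf two_ne_zero, one_mul, mul_two]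
  nth_rewrite 2 [h]
  exact sum_filter_add_sum_filter_not s p f

namespace CarrollNAND

/-- The set of propositions true in an outcome, which identifies outcomes with proper subsets of
`Fin 3`. The indices `0`, `1`, `2` stand for `A`, the edge `r`, and `B`, in the order of the
coordinates of `CarrollNAND`. -/
def trueSet (ω : CarrollNAND) : Finset (Fin 3) :=
  {i | ![ω.val.1, ω.val.2.1, ω.val.2.2] i = true}

theorem trueSet_injective : Function.Injective trueSet := by decide

theorem image_trueSet : univ.image trueSet = ssubsets univ := by decide

theorem card_trueSet (ω : CarrollNAND) :
    #(trueSet ω) = ω.val.1.toNat + ω.val.2.1.toNat + ω.val.2.2.toNat := by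
  revert ω
  decide

theorem sum_filter_trueSet {M : Type*} [AddCommMonoid M] (p : Finset (Fin 3) → Prop)
    [DecidablePred p] (f : Finset (Fin 3) → M) :
    ∑ ω with p (trueSet ω), f (trueSet ω) = ∑ t ∈ ssubsets univ with p t, f t := by
  rw [← image_trueSet, filter_image, sum_image trueSet_injective.injOn]

end CarrollNAND

open CarrollNAND

theorem exp_goldenShares_div {b : ℝ} (hb : b ≠ 0) (ω : CarrollNAND) :
    Real.exp (goldenShares b ω / b) = Real.goldenRatio ^ #(trueSet ω) := by
  rw [goldenShares, ← card_trueSet, mul_assoc, mul_div_cancel_left₀ _ hb, mul_comm,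
    Real.exp_nat_mul, Real.exp_log Real.goldenRatio_pos]

theorem goldenShares_price_eq_one_half {b : ℝ} (hb : b ≠ 0) (i : Fin 3) :
    (∑ ω with i ∈ trueSet ω, Real.exp (goldenShares b ω / b)) /
      ∑ ω, Real.exp (goldenShares b ω / b) = 1 / 2 := by
  have total_pos : 0 < ∑ ω, Real.exp (goldenShares b ω / b) :=
    sum_pos (fun ω _ => Real.exp_pos _) ⟨⟨(false, false, false), by decide⟩, mem_univ _⟩
  refine sum_filter_div_sum_eq_one_half total_pos.ne' ?_
  simp only [exp_goldenShares_div hb]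
  rw [sum_filter_trueSet (i ∈ ·) (Real.goldenRatio ^ #·),
    sum_filter_trueSet (i ∉ ·) (Real.goldenRatio ^ #·)]
  exact sum_ssubsets_mem_pow_card_eq_notMem_of_sq_eq_add_one Real.goldenRatio_sq
    (card_fin 3) (mem_univ i)

/-- In the golden-ratio-initialized NAND market, all three propositional
securities `A = {ω | ω_a = true}`, `R = {ω | ω_r = true}`, `B = {ω | ω_β = true}`
have LMSR price exactly `1/2`. -/
theorem golden_ratio_initialization_prices_one_half (b : ℝ) (hb : 0 < b) :
    ((∑ ω ∈ (univ : Finset CarrollNAND).filter (fun ω => ω.val.1 = true),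
        Real.exp (goldenShares b ω / b)) /
      (∑ ω : CarrollNAND, Real.exp (goldenShares b ω / b)) = 1 / 2) ∧
    ((∑ ω ∈ (univ : Finset CarrollNAND).filter (fun ω => ω.val.2.1 = true),
        Real.exp (goldenShares b ω / b)) /
      (∑ ω : CarrollNAND, Real.exp (goldenShares b ω / b)) = 1 / 2) ∧
    ((∑ ω ∈ (univ : Finset CarrollNAND).filter (fun ω => ω.val.2.2 = true),
        Real.exp (goldenShares b ω / b)) /
      (∑ ω : CarrollNAND, Real.exp (goldenShares b ω / b)) = 1 / 2) := by
  have price := goldenShares_price_eq_one_half hb.ne'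
  refine ⟨?_, ?_, ?_⟩
  · simpa [trueSet] using price 0
  · simpa [trueSet] using price 1
  · simpa [trueSet] using price 2
end
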